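/- For every integer r ≥ 2 and all reals d, δ > 0 there exists ε'₀ > 0 such that for every ε' ∈ (0, ε'₀] there exist ε > 0 and m₀ ∈ ℕ with the following property for all integers m ≥ m₀. Let R be a graph on vertex set [r] and let 𝓕 = (𝒱, 𝒞, 𝐆) be a half-super R-template with parameters (m, ε, d, δ). Then for every c ∈ 𝒞 there is a spanning subgraph G'_c ⊆ G_c such that, setting 𝐆' = (G'_c : c ∈ 𝒞), the triple (𝒱, 𝒞, 𝐆') is a super R-template with parameters (m, ε', d²/2, δ). -/

import Mathlib

open Finset
open scoped Classical

/-- Number of ordered pairs `(x,y) ∈ A × B` with `{x,y}` an edge of `G`. -/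
noncomputable def pairCount {V : Type*} (G : SimpleGraph V) (A B : Finset V) : ℕ :=
  ((A ×ˢ B).filter (fun p => G.Adj p.1 p.2)).card

/-- Number of neighbours of `v` in `B`. -/
noncomputable def degIn {V : Type*} (G : SimpleGraph V) (v : V) (B : Finset V) : ℕ :=
  (B.filter (fun w => G.Adj v w)).card

/-- Degree of `v` in `G`. -/
noncomputable def degOf {V : Type*} [Fintype V] (G : SimpleGraph V) (v : V) : ℕ :=
  ((univ : Finset V).filter (fun w => G.Adj v w)).card

/-- Number of edges of `G`. -/
noncomputable def edgeCnt {V : Type*} [Fintype V] (G : SimpleGraph V) : ℕ :=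
  ((univ : Finset (Sym2 V)).filter (fun e => e ∈ G.edgeSet)).card

/-- Number of edges of `H` with one endpoint in `A` and the other in `B`. -/
noncomputable def eBetween {W : Type*} [Fintype W] (H : SimpleGraph W) (A B : Finset W) : ℕ :=
  ((univ : Finset (Sym2 W)).filter
    (fun e => e ∈ H.edgeSet ∧ ∃ x ∈ A, ∃ y ∈ B, e = s(x, y))).card

/-- A graph `H` on `h` vertices is `μ`-separable if there is `X ⊆ V(H)` with `|X| ≤ μ h`
such that every connected component of `H - X` has at most `μ h` vertices. -/
def Separable {W : Type*} [Fintype W] (H : SimpleGraph W) (μ : ℝ) : Prop :=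
  ∃ X : Finset W, (X.card : ℝ) ≤ μ * (Fintype.card W : ℝ) ∧
    ∀ K : (SimpleGraph.induce ((↑X : Set W)ᶜ) H).ConnectedComponent,
      (K.supp.ncard : ℝ) ≤ μ * (Fintype.card W : ℝ)

/-- A transversal copy of `H` in the graph collection `G`. -/
def HasTransversal {V C W : Type*} (G : C → SimpleGraph V) (H : SimpleGraph W) : Prop :=
  ∃ (τ : W → V) (σ : Sym2 W → C),
    Function.Injective τ ∧ Set.InjOn σ H.edgeSet ∧
    ∀ x y, H.Adj x y → (G (σ s(x, y))).Adj (τ x) (τ y)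

/-- Density of a collection of bipartite graphs. -/
noncomputable def colDensity {V C : Type*} (G : C → SimpleGraph V)
    (A B : Finset V) (D : Finset C) : ℝ :=
  (∑ c ∈ D, (pairCount (G c) A B : ℝ)) / ((D.card : ℝ) * (A.card : ℝ) * (B.card : ℝ))

/-- `(ε,d)`-regularity of a collection of bipartite graphs with parts `V₁, V₂`
and colour set `D`. -/
def ColReg {V C : Type*} (ε d : ℝ) (G : C → SimpleGraph V)
    (V₁ V₂ : Finset V) (D : Finset C) : Prop :=
  d ≤ colDensity G V₁ V₂ D ∧
  ∀ V₁' ⊆ V₁, ∀ V₂' ⊆ V₂, ∀ D' ⊆ D,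
    ε * (V₁.card : ℝ) ≤ (V₁'.card : ℝ) → ε * (V₂.card : ℝ) ≤ (V₂'.card : ℝ) →
    ε * (D.card : ℝ) ≤ (D'.card : ℝ) →
    |colDensity G V₁' V₂' D' - colDensity G V₁ V₂ D| < ε

/-- `(ε,d)`-superregularity of a collection of bipartite graphs. -/
def ColSuperReg {V C : Type*} (ε d : ℝ) (G : C → SimpleGraph V)
    (V₁ V₂ : Finset V) (D : Finset C) : Prop :=
  ColReg ε d G V₁ V₂ D ∧
  (∀ v ∈ V₁, d * (V₂.card : ℝ) * (D.card : ℝ) ≤ ∑ c ∈ D, (degIn (G c) v V₂ : ℝ)) ∧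
  (∀ v ∈ V₂, d * (V₁.card : ℝ) * (D.card : ℝ) ≤ ∑ c ∈ D, (degIn (G c) v V₁ : ℝ)) ∧
  (∀ c ∈ D, d * (V₁.card : ℝ) * (V₂.card : ℝ) ≤ (pairCount (G c) V₁ V₂ : ℝ))

/-- `(ε,d)`-half-superregularity of a collection of bipartite graphs. -/
def ColHalfSuperReg {V C : Type*} (ε d : ℝ) (G : C → SimpleGraph V)
    (V₁ V₂ : Finset V) (D : Finset C) : Prop :=
  (∀ V₁' ⊆ V₁, ∀ V₂' ⊆ V₂, ∀ D' ⊆ D,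
    ε * (V₁.card : ℝ) ≤ (V₁'.card : ℝ) → ε * (V₂.card : ℝ) ≤ (V₂'.card : ℝ) →
    ε * (D.card : ℝ) ≤ (D'.card : ℝ) →
    d * (D'.card : ℝ) * (V₁'.card : ℝ) * (V₂'.card : ℝ) ≤
      ∑ c ∈ D', (pairCount (G c) V₁' V₂' : ℝ)) ∧
  (∀ v ∈ V₁, d * (V₂.card : ℝ) * (D.card : ℝ) ≤ ∑ c ∈ D, (degIn (G c) v V₂ : ℝ)) ∧
  (∀ v ∈ V₂, d * (V₁.card : ℝ) * (D.card : ℝ) ≤ ∑ c ∈ D, (degIn (G c) v V₁ : ℝ)) ∧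
  (∀ c ∈ D, d * (V₁.card : ℝ) * (V₂.card : ℝ) ≤ (pairCount (G c) V₁ V₂ : ℝ))

/-- `(ε,d)`-half-superregularity of a bipartite graph (given by an adjacency relation)
with parts `V₁, V₂`. -/
def BipHalfSuper {V : Type*} (ε d : ℝ) (A : V → V → Prop) (V₁ V₂ : Finset V) : Prop :=
  (∀ U₁ ⊆ V₁, ∀ U₂ ⊆ V₂,
    ε * (V₁.card : ℝ) ≤ (U₁.card : ℝ) → ε * (V₂.card : ℝ) ≤ (U₂.card : ℝ) →
    d * (U₁.card : ℝ) * (U₂.card : ℝ) ≤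
      (((U₁ ×ˢ U₂).filter (fun p => A p.1 p.2)).card : ℝ)) ∧
  (∀ x ∈ V₁, d * (V₂.card : ℝ) ≤ ((V₂.filter (fun y => A x y)).card : ℝ)) ∧
  (∀ y ∈ V₂, d * (V₁.card : ℝ) ≤ ((V₁.filter (fun x => A x y)).card : ℝ))

/-- Number of ordered triples `(x₁,x₂,x₃) ∈ U₁ × U₂ × U₃` with `{x₁,x₂,x₃}` an edge. -/
noncomputable def tripCount {V : Type*} (E : Set (Finset V)) (U₁ U₂ U₃ : Finset V) : ℕ :=
  ((U₁ ×ˢ U₂ ×ˢ U₃).filter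
    (fun p => ({p.1, p.2.1, p.2.2} : Finset V) ∈ E)).card

/-- Density of the triple `(U₁,U₂,U₃)` in a `3`-graph. -/
noncomputable def tripDensity {V : Type*} (E : Set (Finset V)) (U₁ U₂ U₃ : Finset V) : ℝ :=
  (tripCount E U₁ U₂ U₃ : ℝ) / ((U₁.card : ℝ) * (U₂.card : ℝ) * (U₃.card : ℝ))

/-- Degree of a vertex in a hypergraph: the number of edges containing it. -/
noncomputable def hDeg {V : Type*} [Fintype V] (E : Set (Finset V)) (v : V) : ℕ :=
  ((univ : Finset (Finset V)).filter (fun e => e ∈ E ∧ v ∈ e)).card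

/-- Weak `(ε,d)`-regularity of a 3-partite triple in a 3-graph. -/
def TripReg {V : Type*} (ε d : ℝ) (E : Set (Finset V)) (V₁ V₂ V₃ : Finset V) : Prop :=
  d ≤ tripDensity E V₁ V₂ V₃ ∧
  ∀ U₁ ⊆ V₁, ∀ U₂ ⊆ V₂, ∀ U₃ ⊆ V₃,
    ε * (V₁.card : ℝ) ≤ (U₁.card : ℝ) → ε * (V₂.card : ℝ) ≤ (U₂.card : ℝ) →
    ε * (V₃.card : ℝ) ≤ (U₃.card : ℝ) →
    |tripDensity E U₁ U₂ U₃ - tripDensity E V₁ V₂ V₃| < ε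

/-- Weak `(ε,d)`-half-superregularity of a 3-partite triple in a 3-graph. -/
def TripHalfSuper {V : Type*} (ε d : ℝ) (E : Set (Finset V)) (V₁ V₂ V₃ : Finset V) : Prop :=
  (∀ U₁ ⊆ V₁, ∀ U₂ ⊆ V₂, ∀ U₃ ⊆ V₃,
    ε * (V₁.card : ℝ) ≤ (U₁.card : ℝ) → ε * (V₂.card : ℝ) ≤ (U₂.card : ℝ) →
    ε * (V₃.card : ℝ) ≤ (U₃.card : ℝ) →
    d * (U₁.card : ℝ) * (U₂.card : ℝ) * (U₃.card : ℝ) ≤ (tripCount E U₁ U₂ U₃ : ℝ)) ∧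
  (∀ x ∈ V₁, d * (V₂.card : ℝ) * (V₃.card : ℝ) ≤ (tripCount E {x} V₂ V₃ : ℝ)) ∧
  (∀ y ∈ V₂, d * (V₁.card : ℝ) * (V₃.card : ℝ) ≤ (tripCount E V₁ {y} V₃ : ℝ)) ∧
  (∀ z ∈ V₃, d * (V₁.card : ℝ) * (V₂.card : ℝ) ≤ (tripCount E V₁ V₂ {z} : ℝ))

/-- A copy of the 1-expansion of `H` in a 3-graph with edge set `E`. -/
def HasExpansionCopy {V W : Type*} (E : Set (Finset V)) (H : SimpleGraph W) : Prop :=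
  ∃ (ρv : W → V) (ρe : Sym2 W → V),
    Function.Injective ρv ∧ Set.InjOn ρe H.edgeSet ∧
    (∀ x, ∀ e ∈ H.edgeSet, ρv x ≠ ρe e) ∧
    ∀ x y, H.Adj x y → ({ρv x, ρv y, ρe s(x, y)} : Finset V) ∈ E

/-- Number of edges (as functions picking one vertex per part) inside the sets `U i`. -/
noncomputable def kCount {V : Type*} {k : ℕ} (E : Set (Fin k → V)) (U : Fin k → Finset V) : ℕ :=
  ((Fintype.piFinset U).filter (fun e => e ∈ E)).card

/-- Density of a `k`-tuple in a `k`-partite `k`-graph. -/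
noncomputable def kDensity {V : Type*} {k : ℕ} (E : Set (Fin k → V)) (U : Fin k → Finset V) : ℝ :=
  (kCount E U : ℝ) / ∏ i, ((U i).card : ℝ)

/-- Degree of `x` as a vertex of the `i`-th part of a `k`-partite `k`-graph. -/
noncomputable def kDegAt {V : Type*} [Fintype V] {k : ℕ} (E : Set (Fin k → V))
    (i : Fin k) (x : V) : ℕ :=
  ((univ : Finset (Fin k → V)).filter (fun e => e ∈ E ∧ e i = x)).card

/-- Weak ε-regularity of a `k`-tuple in a `k`-partite `k`-graph. -/
def KTupleReg {V : Type*} {k : ℕ} (ε : ℝ) (E : Set (Fin k → V)) (Wp : Fin k → Finset V) : Prop :=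
  ∀ U : Fin k → Finset V, (∀ i, U i ⊆ Wp i) →
    (∀ i, ε * ((Wp i).card : ℝ) ≤ ((U i).card : ℝ)) →
    |kDensity E U - kDensity E Wp| < ε

/-- Weak `(ε,d)`-regularity of a `k`-partite `k`-graph with parts `P`. -/
def KReg {V : Type*} {k : ℕ} (ε d : ℝ) (E : Set (Fin k → V)) (P : Fin k → Finset V) : Prop :=
  d ≤ kDensity E P ∧
  ∀ U : Fin k → Finset V, (∀ i, U i ⊆ P i) →
    (∀ i, ε * ((P i).card : ℝ) ≤ ((U i).card : ℝ)) →
    |kDensity E U - kDensity E P| < ε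

/-- Weak `(ε,d)`-superregularity of a `k`-partite `k`-graph with parts `P`. -/
def KSuper {V : Type*} [Fintype V] {k : ℕ} (ε d : ℝ) (E : Set (Fin k → V))
    (P : Fin k → Finset V) : Prop :=
  KReg ε d E P ∧
  ∀ i, ∀ x ∈ P i, d * (∏ j, ((P j).card : ℝ)) / ((P i).card : ℝ) ≤ (kDegAt E i x : ℝ)

/-- Weak `(ε,d)`-half-superregularity of a `k`-partite `k`-graph with parts `P`. -/
def KHalfSuper {V : Type*} [Fintype V] {k : ℕ} (ε d : ℝ) (E : Set (Fin k → V))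
    (P : Fin k → Finset V) : Prop :=
  (∀ U : Fin k → Finset V, (∀ i, U i ⊆ P i) →
    (∀ i, ε * ((P i).card : ℝ) ≤ ((U i).card : ℝ)) →
    d ≤ kDensity E U) ∧
  ∀ i, ∀ x ∈ P i, d * (∏ j, ((P j).card : ℝ)) / ((P i).card : ℝ) ≤ (kDegAt E i x : ℝ)

/-- An `R`-template: vertex clusters `Vc`, colour clusters `Cc i j` (one for each
edge `ij` of `R`), and for each colour `c ∈ Cc i j` a bipartite graph `Ge c i j`
with parts `Vc i`, `Vc j`.  The graph `G_c` of the collection is the union of the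
`Ge c i j` over the edges `ij` of `R` whose colour cluster contains `c`. -/
structure GTemplate (V C : Type*) (r : ℕ) where
  R : SimpleGraph (Fin r)
  Vc : Fin r → Finset V
  Cc : Fin r → Fin r → Finset C
  Ge : C → Fin r → Fin r → SimpleGraph V
  Cc_symm : ∀ i j, Cc i j = Cc j i
  Ge_symm : ∀ c i j, Ge c i j = Ge c j i
  Vc_disj : ∀ i j, i ≠ j → Disjoint (Vc i) (Vc j)
  Cc_support : ∀ i j, ¬ R.Adj i j → Cc i j = ∅
  Ge_support : ∀ c i j, c ∉ Cc i j → Ge c i j = ⊥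
  Ge_bipartite : ∀ c i j x y, (Ge c i j).Adj x y →
    (x ∈ Vc i ∧ y ∈ Vc j) ∨ (x ∈ Vc j ∧ y ∈ Vc i)

namespace GTemplate

variable {V C : Type*} {r : ℕ}

/-- The graph `G_c` of the template: the union of the bipartite pieces. -/
noncomputable def Gc (T : GTemplate V C r) (c : C) : SimpleGraph V :=
  ⨆ i, ⨆ j, T.Ge c i j

/-- `T` is an `R`-template with parameters `(m, ε, d, δ)`. -/
def IsParam (T : GTemplate V C r) (m ε d δ : ℝ) : Prop :=
  (∀ j, m ≤ ((T.Vc j).card : ℝ) ∧ ((T.Vc j).card : ℝ) ≤ m / δ) ∧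
  (∀ i j, T.R.Adj i j → δ * m ≤ ((T.Cc i j).card : ℝ)) ∧
  (∀ i j, T.R.Adj i j →
    ColReg ε d (fun c => T.Ge c i j) (T.Vc i) (T.Vc j) (T.Cc i j))

/-- `T` is a super `R`-template with parameters `(m, ε, d, δ)`. -/
def IsSuperParam (T : GTemplate V C r) (m ε d δ : ℝ) : Prop :=
  (∀ j, m ≤ ((T.Vc j).card : ℝ) ∧ ((T.Vc j).card : ℝ) ≤ m / δ) ∧
  (∀ i j, T.R.Adj i j → δ * m ≤ ((T.Cc i j).card : ℝ)) ∧
  (∀ i j, T.R.Adj i j →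
    ColSuperReg ε d (fun c => T.Ge c i j) (T.Vc i) (T.Vc j) (T.Cc i j))

/-- `T` is a half-super `R`-template with parameters `(m, ε, d, δ)`. -/
def IsHalfSuperParam (T : GTemplate V C r) (m ε d δ : ℝ) : Prop :=
  (∀ j, m ≤ ((T.Vc j).card : ℝ) ∧ ((T.Vc j).card : ℝ) ≤ m / δ) ∧
  (∀ i j, T.R.Adj i j → δ * m ≤ ((T.Cc i j).card : ℝ)) ∧
  (∀ i j, T.R.Adj i j →
    ColHalfSuperReg ε d (fun c => T.Ge c i j) (T.Vc i) (T.Vc j) (T.Cc i j))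

/-- `T` is a semi-super `R`-template with parameters `(m, ε, d, δ)`. -/
def IsSemiSuperParam (T : GTemplate V C r) (m ε d δ : ℝ) : Prop :=
  T.IsParam m ε d δ ∧
  ∀ i j, T.R.Adj i j →
    (∀ v ∈ T.Vc i, d * ((T.Vc j).card : ℝ) * ((T.Cc i j).card : ℝ) ≤
      ∑ c ∈ T.Cc i j, (degIn (T.Ge c i j) v (T.Vc j) : ℝ)) ∧
    (∀ v ∈ T.Vc j, d * ((T.Vc i).card : ℝ) * ((T.Cc i j).card : ℝ) ≤
      ∑ c ∈ T.Cc i j, (degIn (T.Ge c i j) v (T.Vc i) : ℝ))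

/-- The template is rainbow: the colour clusters are pairwise disjoint. -/
def Rainbow (T : GTemplate V C r) : Prop :=
  ∀ i j k l, T.R.Adj i j → T.R.Adj k l → s(i, j) ≠ s(k, l) →
    Disjoint (T.Cc i j) (T.Cc k l)

/-- Adjacency in the `l`-thick graph of the template, between clusters `i` and `j`. -/
def ThickAdj (T : GTemplate V C r) (l : ℝ) (i j : Fin r) (x y : V) : Prop :=
  l * ((T.Cc i j).card : ℝ) ≤
    (((T.Cc i j).filter (fun c => (T.Ge c i j).Adj x y)).card : ℝ)

end GTemplate

/-!
It suffices to treat one edge `ij` of `R`, viewing the graphs on it as a `3`-graph between `Vc i`,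
`Vc j` and `Cc i j`. Half-superregularity bounds the density of this `3`-graph only from below,
so the dense places have to be thinned.

An energy increment yields a partition of the three vertex classes into boundedly many pieces
that is weakly regular for the `3`-graph. In a box of the partition of density `u ≥ d` every edge
receives the weight `d / u`, and in every other box the weight `1`. Since `ε` is small compared
with the number of pieces, boxes of density below `d` occupy a negligible proportion, so the
weights have density about `d` on every large box and the weighted `3`-graph is regular. Moreover,
as `u ≤ 1`, each edge has weight at least `d`, so that the weighted degrees and the weighted sizes
of the colours are still at least `d²` times their maximal values.

Finally each colour is rounded to a graph by keeping every edge with probability equal to its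
weight. By Chernoff bounds all boxes and all degrees are then correct up to an error of at most
`d² / 2`, which accounts for the minimum density `d² / 2` in the conclusion. Failure has
exponentially small probability for large `m`, whatever the number of colours, because no union
bound over the colours is needed: each of them is rounded separately.
-/

open scoped BigOperators

section Rounding

variable {I J : Type*}

lemma exp_le_one_add_add_sq {x : ℝ} (hx : |x| ≤ 1) : Real.exp x ≤ 1 + x + x ^ 2 := by
  have h := (abs_le.1 (Real.abs_exp_sub_one_sub_id_le hx)).2
  linarith

lemma centered_bernoulli_mgf_le {w t : ℝ} (hw0 : 0 ≤ w) (hw1 : w ≤ 1) (ht : |t| ≤ 1) :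
    w * Real.exp (t * (1 - w)) + (1 - w) * Real.exp (-(t * w)) ≤ Real.exp (t ^ 2) := by
  have hw1' : 0 ≤ 1 - w := sub_nonneg.2 hw1
  have hone : Real.exp (t * (1 - w)) ≤ 1 + t * (1 - w) + (t * (1 - w)) ^ 2 := by
    refine exp_le_one_add_add_sq ?_
    rw [abs_mul, abs_of_nonneg hw1']
    exact mul_le_one₀ ht hw1' (by linarith)
  have hzero : Real.exp (-(t * w)) ≤ 1 + -(t * w) + (-(t * w)) ^ 2 := by
    refine exp_le_one_add_add_sq ?_
    rw [abs_neg, abs_mul, abs_of_nonneg hw0]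
    exact mul_le_one₀ ht hw0 hw1
  calc w * Real.exp (t * (1 - w)) + (1 - w) * Real.exp (-(t * w))
      ≤ w * (1 + t * (1 - w) + (t * (1 - w)) ^ 2)
        + (1 - w) * (1 + -(t * w) + (-(t * w)) ^ 2) := by gcongr
    _ = 1 + t ^ 2 * (w * (1 - w)) := by ring
    _ ≤ t ^ 2 + 1 := by nlinarith [mul_nonneg (sq_nonneg t) (sq_nonneg w), sq_nonneg t]
    _ ≤ Real.exp (t ^ 2) := Real.add_one_le_exp _

variable [Fintype J]

lemma sum_exp_exclude_le_or_include_le {w : ℝ} (hw0 : 0 ≤ w) (hw1 : w ≤ 1) {t q : J → ℝ}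
    (ht : ∀ j, |t j| ≤ 1) (hq : ∀ j, 0 ≤ q j) :
    ∑ j, q j * Real.exp (-(t j * w)) ≤ ∑ j, q j * Real.exp (t j ^ 2) ∨
      w ≠ 0 ∧ ∑ j, q j * Real.exp (t j * (1 - w)) ≤ ∑ j, q j * Real.exp (t j ^ 2) := by
  have average : w * ∑ j, q j * Real.exp (t j * (1 - w))
      + (1 - w) * ∑ j, q j * Real.exp (-(t j * w)) ≤ ∑ j, q j * Real.exp (t j ^ 2) := by
    rw [mul_sum, mul_sum, ← sum_add_distrib]
    refine sum_le_sum fun j _ => ?_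
    have h := mul_le_mul_of_nonneg_left (centered_bernoulli_mgf_le hw0 hw1 (ht j)) (hq j)
    linarith
  refine or_iff_not_imp_left.2 fun hexclude => ?_
  rw [not_le] at hexclude
  have hw : w ≠ 0 := by
    rintro rfl
    linarith
  refine ⟨hw, le_of_mul_le_mul_left ?_ (hw0.lt_of_ne' hw)⟩
  nlinarith [mul_le_mul_of_nonneg_left hexclude.le (sub_nonneg.2 hw1)]

-- The method of conditional expectations: a random set containing each `i` independently with
-- probability `w i` satisfies the bound on average, and its elements can be fixed one at a time.
lemma exists_subset_sum_exp_le {w : I → ℝ} (hw0 : ∀ i, 0 ≤ w i) (hw1 : ∀ i, w i ≤ 1)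
    {f : J → I → ℝ} (hf : ∀ j i, |f j i| ≤ 1) (s : Finset I) {q : J → ℝ} (hq : ∀ j, 0 ≤ q j) :
    ∃ H ⊆ s, (∀ i ∈ H, w i ≠ 0) ∧
      ∑ j, q j * Real.exp (∑ i ∈ H, f j i - ∑ i ∈ s, f j i * w i) ≤
        ∑ j, q j * Real.exp (∑ i ∈ s, f j i ^ 2) := by
  induction s using Finset.induction_on generalizing q with
  | empty => exact ⟨∅, Subset.rfl, by simp, by simp⟩
  | insert i s hi ih =>
    obtain ⟨H, hHs, hHw, hH⟩ := ih (q := fun j => q j * Real.exp (f j i ^ 2))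
      fun j => mul_nonneg (hq j) (Real.exp_nonneg _)
    set p : J → ℝ := fun j => q j * Real.exp (∑ k ∈ H, f j k - ∑ k ∈ s, f j k * w k) with hp
    have hbound : ∑ j, p j * Real.exp (f j i ^ 2) ≤
        ∑ j, q j * Real.exp (∑ k ∈ insert i s, f j k ^ 2) := by
      convert hH using 2 with j _ j _
      · rw [hp]; ring
      · rw [sum_insert hi, Real.exp_add]; ring
    have hiH : i ∉ H := fun h => hi (hHs h)
    rcases sum_exp_exclude_le_or_include_le (hw0 i) (hw1 i) (fun j => hf j i)
      (fun j => mul_nonneg (hq j) (Real.exp_nonneg _) : ∀ j, 0 ≤ p j) with hle | ⟨hwi, hle⟩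
    · refine ⟨H, hHs.trans (subset_insert i s), hHw, (le_of_eq ?_).trans (hle.trans hbound)⟩
      refine sum_congr rfl fun j _ => ?_
      rw [mul_assoc, ← Real.exp_add, sum_insert hi]
      ring_nf
    · refine ⟨insert i H, insert_subset_insert i hHs, ?_, (le_of_eq ?_).trans (hle.trans hbound)⟩
      · exact forall_mem_insert .. |>.2 ⟨hwi, hHw⟩
      · refine sum_congr rfl fun j _ => ?_
        rw [mul_assoc, ← Real.exp_add, sum_insert hi, sum_insert hiH]
        ring_nf

lemma exists_subset_sum_sub_sum_mul_le {w : I → ℝ} (hw0 : ∀ i, 0 ≤ w i) (hw1 : ∀ i, w i ≤ 1)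
    {f : J → I → ℝ} (hf : ∀ j i, |f j i| ≤ 1) (s : Finset I) {τ : J → ℝ}
    (hτ : ∑ j, Real.exp (∑ i ∈ s, f j i ^ 2 - τ j) < 1) :
    ∃ H ⊆ s, (∀ i ∈ H, w i ≠ 0) ∧ ∀ j, ∑ i ∈ H, f j i - ∑ i ∈ s, f j i * w i ≤ τ j := by
  obtain ⟨H, hHs, hHw, hH⟩ := exists_subset_sum_exp_le hw0 hw1 hf s
    (q := fun j => Real.exp (-τ j)) fun j => Real.exp_nonneg _
  simp only [← Real.exp_add] at hH
  refine ⟨H, hHs, hHw, fun j => ?_⟩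
  have hj : Real.exp (-τ j + (∑ i ∈ H, f j i - ∑ i ∈ s, f j i * w i)) < 1 :=
    calc _ ≤ ∑ j, Real.exp (-τ j + (∑ i ∈ H, f j i - ∑ i ∈ s, f j i * w i)) :=
          single_le_sum (f := fun j => Real.exp (-τ j + (∑ i ∈ H, f j i - ∑ i ∈ s, f j i * w i)))
            (fun _ _ => Real.exp_nonneg _) (mem_univ j)
      _ ≤ ∑ j, Real.exp (-τ j + ∑ i ∈ s, f j i ^ 2) := hH
      _ < 1 := by simpa only [neg_add_eq_sub] using hτ
  linarith [Real.exp_lt_one_iff.1 hj]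

lemma exists_subset_abs_card_inter_sub_le [DecidableEq I] {w : I → ℝ}
    (hw0 : ∀ i, 0 ≤ w i) (hw1 : ∀ i, w i ≤ 1)
    {s : Finset I} {T : J → Finset I} (hT : ∀ j, T j ⊆ s) {n : J → ℝ} (hn : ∀ j, #(T j) ≤ n j)
    {η : ℝ} (hη0 : 0 < η) (hη1 : η ≤ 1)
    (hsum : 2 * ∑ j, Real.exp (-(η ^ 2 / 4 * n j)) < 1) :
    ∃ H ⊆ s, (∀ i ∈ H, w i ≠ 0) ∧ ∀ j, |(#(H ∩ T j) : ℝ) - ∑ i ∈ T j, w i| ≤ η * n j := by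
  let sign : Bool → ℝ := fun b => cond b 1 (-1)
  let f : J × Bool → I → ℝ := fun j i => if i ∈ T j.1 then sign j.2 * (η / 2) else 0
  have hf : ∀ j i, |f j i| ≤ 1 := by
    rintro ⟨j, b⟩ i
    rw [abs_le]
    cases b <;> simp only [f, sign, cond] <;> split_ifs <;> constructor <;> linarith
  have hsq : ∀ j, ∑ i ∈ s, f j i ^ 2 = η ^ 2 / 4 * #(T j.1) := by
    rintro ⟨j, b⟩
    have hsquare : ∀ i, f (j, b) i ^ 2 = if i ∈ T j then η ^ 2 / 4 else 0 := by
      intro i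
      cases b <;> simp only [f, sign, cond] <;> split_ifs <;> ring
    simp only [hsquare, sum_ite_mem, inter_eq_right.2 (hT j), sum_const, nsmul_eq_mul, mul_comm]
  obtain ⟨H, hHs, hHw, hH⟩ := exists_subset_sum_sub_sum_mul_le hw0 hw1 hf s
    (τ := fun j => η ^ 2 / 2 * n j.1) <| by
      refine lt_of_le_of_lt (sum_le_sum fun j _ => Real.exp_le_exp.2 ?_)
        (b := ∑ j : J × Bool, Real.exp (-(η ^ 2 / 4 * n j.1))) ?_
      · rw [hsq]
        nlinarith [hn j.1, sq_nonneg η]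
      · simpa [Fintype.sum_prod_type, ← mul_sum, mul_comm] using hsum
  refine ⟨H, hHs, hHw, fun j => ?_⟩
  have hdev : ∀ b, sign b * (#(H ∩ T j) - ∑ i ∈ T j, w i) ≤ η * n j := by
    intro b
    have h := hH (j, b)
    simp only [f, ite_mul, zero_mul, sum_ite_mem, inter_eq_right.2 (hT j), sum_const, nsmul_eq_mul,
      ← mul_sum] at h
    nlinarith
  have hpos := hdev true
  have hneg := hdev false
  simp only [sign, cond] at hpos hneg
  exact abs_le.2 ⟨by linarith, by linarith⟩

end Rounding

/-- The union bound, over the two signs and over all boxes `A × B ⊆ X × Y`, all rows `{x} × Y` and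
all columns `X × {y}` with `|X| = a` and `|Y| = b`, for the failure of randomised rounding. The
exponential rate is `κ = η² / 4` for boxes to be rounded up to a relative error `η`. -/
noncomputable def roundingFailure (κ : ℝ) (a b : ℕ) : ℝ :=
  2 * (2 ^ a * 2 ^ b * Real.exp (-(κ * (a * b)))
    + (a * Real.exp (-(κ * b)) + b * Real.exp (-(κ * a))))

lemma exists_subset_product_discrepancy_le {V₁ V₂ : Type*} {X : Finset V₁} {Y : Finset V₂}
    {w : V₁ × V₂ → ℝ} (hw0 : ∀ p, 0 ≤ w p) (hw1 : ∀ p, w p ≤ 1)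
    {η : ℝ} (hη0 : 0 < η) (hη1 : η ≤ 1) (hfail : roundingFailure (η ^ 2 / 4) #X #Y < 1) :
    ∃ H ⊆ X ×ˢ Y, (∀ p ∈ H, w p ≠ 0) ∧
      (∀ A ⊆ X, ∀ B ⊆ Y, |(#(H ∩ A ×ˢ B) : ℝ) - ∑ p ∈ A ×ˢ B, w p| ≤ η * (#X * #Y)) ∧
      (∀ x ∈ X, |(#(H ∩ {x} ×ˢ Y) : ℝ) - ∑ p ∈ {x} ×ˢ Y, w p| ≤ η * #Y) ∧
      (∀ y ∈ Y, |(#(H ∩ X ×ˢ {y}) : ℝ) - ∑ p ∈ X ×ˢ {y}, w p| ≤ η * #X) := by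
  let T : (X.powerset × Y.powerset) ⊕ (X ⊕ Y) → Finset (V₁ × V₂) :=
    Sum.elim (fun AB => AB.1.1 ×ˢ AB.2.1) (Sum.elim (fun x => {x.1} ×ˢ Y) fun y => X ×ˢ {y.1})
  let n : (X.powerset × Y.powerset) ⊕ (X ⊕ Y) → ℝ :=
    Sum.elim (fun _ => #X * #Y) (Sum.elim (fun _ => #Y) fun _ => #X)
  have hT : ∀ j, T j ⊆ X ×ˢ Y := by
    rintro (⟨⟨A, hA⟩, B, hB⟩ | ⟨x, hx⟩ | ⟨y, hy⟩)
    · exact product_subset_product (mem_powerset.1 hA) (mem_powerset.1 hB)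
    · exact product_subset_product_left (singleton_subset_iff.2 hx)
    · exact product_subset_product_right (singleton_subset_iff.2 hy)
  have hn : ∀ j, #(T j) ≤ n j := by
    rintro (AB | x | y)
    · have h := card_le_card (hT (.inl AB))
      rw [card_product X Y] at h
      simp only [n, Sum.elim_inl]
      exact_mod_cast h
    · simp [T, n]
    · simp [T, n]
  obtain ⟨H, hHs, hHw, hH⟩ := exists_subset_abs_card_inter_sub_le hw0 hw1 hT hn hη0 hη1 <| by
    simpa [roundingFailure, n, mul_assoc] using hfail
  refine ⟨H, hHs, hHw, fun A hA B hB => ?_, fun x hx => ?_, fun y hy => ?_⟩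
  · exact hH (.inl (⟨A, mem_powerset.2 hA⟩, ⟨B, mem_powerset.2 hB⟩))
  · exact hH (.inr (.inl ⟨x, hx⟩))
  · exact hH (.inr (.inr ⟨y, hy⟩))

lemma roundingFailure_le {κ m M : ℝ} (hκ : 0 < κ) (hm : 3 ≤ κ * m) {a b : ℕ} (hma : m ≤ a)
    (haM : a ≤ M) (hmb : m ≤ b) (hbM : b ≤ M) :
    roundingFailure κ a b ≤ 2 * (Real.exp (-m) + 2 * (M * Real.exp (-(κ * m)))) := by
  have two_pow_le_exp (k : ℕ) : (2 : ℝ) ^ k ≤ Real.exp k := by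
    rw [← Real.exp_one_pow]
    exact pow_le_pow_left₀ zero_le_two Real.exp_one_gt_two.le k
  have hexponent : (a : ℝ) + b - κ * (a * b) ≤ -m := by
    nlinarith [mul_le_mul_of_nonneg_left hma hκ.le, mul_le_mul_of_nonneg_left hmb hκ.le]
  have hboxes : (2 : ℝ) ^ a * 2 ^ b * Real.exp (-(κ * (a * b))) ≤ Real.exp (-m) :=
    calc _ ≤ Real.exp a * Real.exp b * Real.exp (-(κ * (a * b))) := by
          gcongr <;> exact two_pow_le_exp _
      _ = Real.exp (a + b - κ * (a * b)) := by rw [← Real.exp_add, ← Real.exp_add]; ring_nf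
      _ ≤ Real.exp (-m) := Real.exp_le_exp.2 hexponent
  have hstars {k l : ℕ} (hk : k ≤ M) (hl : m ≤ l) :
      k * Real.exp (-(κ * l)) ≤ M * Real.exp (-(κ * m)) := by
    have hM0 : 0 ≤ M := k.cast_nonneg.trans hk
    gcongr
  rw [roundingFailure]
  linarith [hstars haM hmb, hstars hbM hma]

lemma eventually_roundingFailure_lt_one {κ δ : ℝ} (hκ : 0 < κ) :
    ∀ᶠ m : ℝ in Filter.atTop, ∀ a b : ℕ, m ≤ a → a ≤ m / δ → m ≤ b → b ≤ m / δ →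
      roundingFailure κ a b < 1 := by
  have hlin : Filter.Tendsto (fun m : ℝ => κ * m * Real.exp (-(κ * m)))
      Filter.atTop (nhds 0) := by
    simpa [Function.comp_def] using (Real.tendsto_pow_mul_exp_neg_atTop_nhds_zero 1).comp
      (Filter.tendsto_id.const_mul_atTop hκ)
  have hlim : Filter.Tendsto
      (fun m : ℝ => 2 * (Real.exp (-m) + 2 * (m / δ * Real.exp (-(κ * m)))))
      Filter.atTop (nhds 0) := by
    convert (Real.tendsto_exp_neg_atTop_nhds_zero.add
      (hlin.const_mul (2 / (κ * δ)))).const_mul 2 using 2 with m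
    · field_simp
    · simp
  have hlarge := Filter.tendsto_id.const_mul_atTop hκ |>.eventually_ge_atTop (3 : ℝ)
  filter_upwards [hlim.eventually_lt_const one_pos, hlarge] with m hlt hm a b hma haM hmb hbM
  exact (roundingFailure_le hκ hm hma haM hmb hbM).trans_lt hlt

section FiberMean

variable {ι L L' : Type*}

/-- The mean of `e` over the points of `Ω` labelled `z`, i.e. the conditional expectation of `e`
given the partition of `Ω` by the labels. It is `0` at labels that are not attained on `Ω`. -/
noncomputable def fiberMean (Ω : Finset ι) (lab : ι → L) (e : ι → ℝ) (z : L) : ℝ :=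
  𝔼 ω ∈ Ω with lab ω = z, e ω

/-- The squared `L²`-distance on `Ω` from `e` to the functions that depend only on the label; it
plays the role of the (complementary) energy of the partition of `Ω` by the labels. -/
noncomputable def residualSumSq (Ω : Finset ι) (lab : ι → L) (e : ι → ℝ) : ℝ :=
  ∑ ω ∈ Ω, (e ω - fiberMean Ω lab e (lab ω)) ^ 2

variable {Ω : Finset ι} {lab : ι → L} {e : ι → ℝ}

lemma fiberMean_nonneg (he : ∀ ω, 0 ≤ e ω) (z : L) : 0 ≤ fiberMean Ω lab e z :=
  expect_nonneg fun ω _ => he ω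

lemma fiberMean_le_one (he : ∀ ω, e ω ≤ 1) (z : L) : fiberMean Ω lab e z ≤ 1 := by
  obtain hΩ | hΩ := {ω ∈ Ω | lab ω = z}.eq_empty_or_nonempty
  · simp [fiberMean, hΩ]
  · exact expect_le hΩ fun ω _ => he ω

lemma card_mul_fiberMean (z : L) :
    #{ω ∈ Ω | lab ω = z} * fiberMean Ω lab e z = ∑ ω ∈ Ω with lab ω = z, e ω :=
  card_mul_expect _ _

lemma le_fiberMean_of_mul_card_le_sum {F : Finset ι} {z : L}
    (hF : ∀ ω, ω ∈ F ↔ ω ∈ Ω ∧ lab ω = z) (hne : F.Nonempty)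
    {d : ℝ} (hd : d * #F ≤ ∑ ω ∈ F, e ω) : d ≤ fiberMean Ω lab e z := by
  have hfiber : F = {ω ∈ Ω | lab ω = z} := by
    ext ω
    rw [hF, mem_filter]
  rw [hfiber] at hne hd
  rw [← card_mul_fiberMean, mul_comm d] at hd
  exact le_of_mul_le_mul_left hd (Nat.cast_pos.2 hne.card_pos)

lemma sum_fiberMean_mul (g : L → ℝ) :
    ∑ ω ∈ Ω, fiberMean Ω lab e (lab ω) * g (lab ω) = ∑ ω ∈ Ω, e ω * g (lab ω) := by
  have hmaps : ∀ ω ∈ Ω, lab ω ∈ Ω.image lab := fun ω hω => mem_image_of_mem lab hω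
  rw [← sum_fiberwise_of_maps_to hmaps, ← sum_fiberwise_of_maps_to hmaps]
  refine sum_congr rfl fun z _ => ?_
  calc ∑ ω ∈ Ω with lab ω = z, fiberMean Ω lab e (lab ω) * g (lab ω)
      = ∑ ω ∈ Ω with lab ω = z, fiberMean Ω lab e z * g z :=
        sum_congr rfl fun ω hω => by rw [(mem_filter.1 hω).2]
    _ = (∑ ω ∈ Ω with lab ω = z, e ω) * g z := by
        rw [sum_const, nsmul_eq_mul, ← mul_assoc, card_mul_fiberMean]
    _ = ∑ ω ∈ Ω with lab ω = z, e ω * g (lab ω) := by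
        rw [sum_mul]
        exact sum_congr rfl fun ω hω => by rw [(mem_filter.1 hω).2]

lemma sum_sub_sq_eq_residualSumSq_add (g : L → ℝ) :
    ∑ ω ∈ Ω, (e ω - g (lab ω)) ^ 2 =
      residualSumSq Ω lab e + ∑ ω ∈ Ω, (fiberMean Ω lab e (lab ω) - g (lab ω)) ^ 2 := by
  have horth := sum_fiberMean_mul (Ω := Ω) (lab := lab) (e := e)
    fun z => fiberMean Ω lab e z - g z
  have hexpand : ∀ ω, (e ω - g (lab ω)) ^ 2 = (e ω - fiberMean Ω lab e (lab ω)) ^ 2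
      + (fiberMean Ω lab e (lab ω) - g (lab ω)) ^ 2
      + 2 * (e ω * (fiberMean Ω lab e (lab ω) - g (lab ω))
        - fiberMean Ω lab e (lab ω) * (fiberMean Ω lab e (lab ω) - g (lab ω))) := by
    intro ω
    ring
  simp only [hexpand, sum_add_distrib, ← mul_sum, sum_sub_distrib, horth, residualSumSq]
  ring

lemma residualSumSq_le_card (he0 : ∀ ω, 0 ≤ e ω) (he1 : ∀ ω, e ω ≤ 1) :
    residualSumSq Ω lab e ≤ #Ω := by
  have h := sum_sub_sq_eq_residualSumSq_add (Ω := Ω) (lab := lab) (e := e) fun _ => 0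
  calc residualSumSq Ω lab e ≤ ∑ ω ∈ Ω, (e ω - 0) ^ 2 := by
        rw [h]
        exact le_add_of_nonneg_right (sum_nonneg fun ω _ => sq_nonneg _)
    _ ≤ #Ω • (1 : ℝ) := sum_le_card_nsmul _ _ _ fun ω _ => by
        rw [sub_zero]
        exact pow_le_one₀ (he0 ω) (he1 ω)
    _ = #Ω := by simp

-- A function of the finer labels that correlates with the residual of `e` must, by
-- Cauchy-Schwarz, be explained by the increment between the two conditional means.
lemma residualSumSq_add_le_of_correlation {lab' : ι → L'} {π : L' → L}
    (hπ : ∀ ω, π (lab' ω) = lab ω) {γ : L' → ℝ} (hγ : ∀ z, |γ z| ≤ 1) {α : ℝ} (hα : 0 ≤ α)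
    (hcorr : α * #Ω ≤ |∑ ω ∈ Ω, (e ω - fiberMean Ω lab e (lab ω)) * γ (lab' ω)|) :
    residualSumSq Ω lab' e + α ^ 2 * #Ω ≤ residualSumSq Ω lab e := by
  let inc : ι → ℝ := fun ω => fiberMean Ω lab' e (lab' ω) - fiberMean Ω lab e (lab ω)
  have hsplit : residualSumSq Ω lab e = residualSumSq Ω lab' e + ∑ ω ∈ Ω, inc ω ^ 2 := by
    have h := sum_sub_sq_eq_residualSumSq_add (Ω := Ω) (lab := lab') (e := e)
      fun z => fiberMean Ω lab e (π z)
    simpa only [hπ, residualSumSq, inc] using h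
  have hinc : ∑ ω ∈ Ω, (e ω - fiberMean Ω lab e (lab ω)) * γ (lab' ω) =
      ∑ ω ∈ Ω, inc ω * γ (lab' ω) := by
    simp only [inc, sub_mul, sum_sub_distrib, sum_fiberMean_mul]
  have hγsq : ∑ ω ∈ Ω, γ (lab' ω) ^ 2 ≤ #Ω := by
    simpa using sum_le_card_nsmul Ω (fun ω => γ (lab' ω) ^ 2) 1
      fun ω _ => (sq_le_one_iff_abs_le_one _).2 (hγ _)
  have hcauchy : (α * #Ω) ^ 2 ≤ (∑ ω ∈ Ω, inc ω ^ 2) * #Ω :=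
    calc (α * #Ω) ^ 2 ≤ |∑ ω ∈ Ω, inc ω * γ (lab' ω)| ^ 2 := by
          rw [← hinc]
          gcongr
      _ ≤ (∑ ω ∈ Ω, inc ω ^ 2) * ∑ ω ∈ Ω, γ (lab' ω) ^ 2 := by
          rw [sq_abs]
          exact sum_mul_sq_le_sq_mul_sq _ _ _
      _ ≤ _ := by gcongr
  have henergy : α ^ 2 * #Ω ≤ ∑ ω ∈ Ω, inc ω ^ 2 := by
    obtain hΩ | hΩ := Ω.eq_empty_or_nonempty
    · simp [hΩ]
    · have hpos : (0 : ℝ) < #Ω := by exact_mod_cast hΩ.card_pos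
      exact le_of_mul_le_mul_right (by linarith) hpos
  linarith

end FiberMean

section WeakRegularity

variable {V₁ V₂ V₃ L : Type*}

/-- Replacing `e` by its means over the fibres of `lab`, after weighting by the function `t` of
these means, changes no sum over a box `A × B × S ⊆ X × Y × Z` by more than `α |X| |Y| |Z|`. -/
def BoxBalanced (α : ℝ) (t : ℝ → ℝ) (X : Finset V₁) (Y : Finset V₂) (Z : Finset V₃)
    (lab : (V₁ × V₂) × V₃ → L) (e : (V₁ × V₂) × V₃ → ℝ) : Prop :=
  ∀ A ⊆ X, ∀ B ⊆ Y, ∀ S ⊆ Z,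
    |∑ ω ∈ (A ×ˢ B) ×ˢ S, (e ω - fiberMean ((X ×ˢ Y) ×ˢ Z) lab e (lab ω)) *
        t (fiberMean ((X ×ˢ Y) ×ˢ Z) lab e (lab ω))| ≤
      α * #((X ×ˢ Y) ×ˢ Z)

/-- The labelling `v ↦ (a v, v ∈ A)`, which splits each fibre of `a` along the set `A`. -/
def splitLabel {V : Type*} (a : V → L) (A : Finset V) (v : V) : L × Prop :=
  (a v, v ∈ A)

variable {X : Finset V₁} {Y : Finset V₂} {Z : Finset V₃} {e : (V₁ × V₂) × V₃ → ℝ}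
  {α : ℝ} {t : ℝ → ℝ}

lemma exists_residualSumSq_splitLabel_add_le (hα : 0 ≤ α) (ht : ∀ u, |t u| ≤ 1)
    {a : V₁ → L} {b : V₂ → L} {l : V₃ → L}
    (hbal : ¬ BoxBalanced α t X Y Z (Prod.map (Prod.map a b) l) e) :
    ∃ (A : Finset V₁) (B : Finset V₂) (S : Finset V₃),
      residualSumSq ((X ×ˢ Y) ×ˢ Z)
          (Prod.map (Prod.map (splitLabel a A) (splitLabel b B)) (splitLabel l S)) e
          + α ^ 2 * #((X ×ˢ Y) ×ˢ Z) ≤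
        residualSumSq ((X ×ˢ Y) ×ˢ Z) (Prod.map (Prod.map a b) l) e := by
  let lab := Prod.map (Prod.map a b) l
  simp only [BoxBalanced, not_forall, not_le] at hbal
  obtain ⟨A, hA, B, hB, S, hS, hcorr⟩ := hbal
  let γ : ((L × Prop) × L × Prop) × L × Prop → ℝ := fun z =>
    if (z.1.1.2 ∧ z.1.2.2) ∧ z.2.2 then
      t (fiberMean ((X ×ˢ Y) ×ˢ Z) lab e ((z.1.1.1, z.1.2.1), z.2.1)) else 0
  have hγ : ∀ z, |γ z| ≤ 1 := by
    intro z
    simp only [γ]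
    split_ifs
    · exact ht _
    · simp
  have hγbox : ∀ ω, γ (Prod.map (Prod.map (splitLabel a A) (splitLabel b B)) (splitLabel l S) ω) =
      if ω ∈ (A ×ˢ B) ×ˢ S then t (fiberMean ((X ×ˢ Y) ×ˢ Z) lab e (lab ω)) else 0 := by
    intro ω
    simp only [mem_product]
    exact if_congr Iff.rfl rfl rfl
  have hbox : (A ×ˢ B) ×ˢ S ⊆ (X ×ˢ Y) ×ˢ Z :=
    product_subset_product (product_subset_product hA hB) hS
  refine ⟨A, B, S, residualSumSq_add_le_of_correlation (lab := lab)
    (π := Prod.map (Prod.map Prod.fst Prod.fst) Prod.fst) (fun ω => rfl) hγ hα ?_⟩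
  simpa only [hγbox, mul_ite, mul_zero, sum_ite_mem, inter_eq_right.2 hbox] using hcorr.le

lemma exists_boxBalanced_of_residualSumSq_lt (hα : 0 ≤ α) (ht : ∀ u, |t u| ≤ 1) (k : ℕ)
    {L : Type} [Fintype L] {a : V₁ → L} {b : V₂ → L} {l : V₃ → L}
    (hk : residualSumSq ((X ×ˢ Y) ×ˢ Z) (Prod.map (Prod.map a b) l) e <
      k * (α ^ 2 * #((X ×ˢ Y) ×ˢ Z))) :
    ∃ (L' : Type) (_ : Fintype L') (a' : V₁ → L') (b' : V₂ → L') (l' : V₃ → L'),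
      Fintype.card L' ≤ Fintype.card L * 2 ^ k ∧
        BoxBalanced α t X Y Z (Prod.map (Prod.map a' b') l') e := by
  induction k generalizing L with
  | zero =>
    rw [Nat.cast_zero, zero_mul] at hk
    exact absurd hk (not_lt.2 (sum_nonneg fun ω _ => sq_nonneg _))
  | succ k ih =>
    by_cases hbal : BoxBalanced α t X Y Z (Prod.map (Prod.map a b) l) e
    · exact ⟨L, _, a, b, l, Nat.le_mul_of_pos_right _ (by positivity), hbal⟩
    · obtain ⟨A, B, S, hdrop⟩ := exists_residualSumSq_splitLabel_add_le hα ht hbal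
      obtain ⟨L', hL', a', b', l', hcard, hbal'⟩ := ih (a := splitLabel a A)
        (b := splitLabel b B) (l := splitLabel l S) (by push_cast at hk; linarith)
      refine ⟨L', hL', a', b', l', hcard.trans_eq ?_, hbal'⟩
      rw [Fintype.card_prod, Fintype.card_prop, mul_assoc, pow_succ']

lemma exists_boxBalanced (ht : ∀ u, |t u| ≤ 1) (he0 : ∀ ω, 0 ≤ e ω) (he1 : ∀ ω, e ω ≤ 1)
    (hX : X.Nonempty) (hY : Y.Nonempty) (hZ : Z.Nonempty) (hα : 0 ≤ α) {K : ℕ}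
    (hK : 1 < K * α ^ 2) :
    ∃ (L : Type) (_ : Fintype L) (a : V₁ → L) (b : V₂ → L) (l : V₃ → L),
      Fintype.card L ≤ 2 ^ K ∧ BoxBalanced α t X Y Z (Prod.map (Prod.map a b) l) e := by
  have hcard : 0 < #((X ×ˢ Y) ×ˢ Z) := ((hX.product hY).product hZ).card_pos
  have hone : residualSumSq ((X ×ˢ Y) ×ˢ Z)
      (Prod.map (Prod.map (fun _ => ()) fun _ => ()) fun _ => ()) e <
        K * (α ^ 2 * #((X ×ˢ Y) ×ˢ Z)) :=
    calc _ ≤ (#((X ×ˢ Y) ×ˢ Z) : ℝ) := residualSumSq_le_card he0 he1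
      _ = 1 * #((X ×ˢ Y) ×ˢ Z) := (one_mul _).symm
      _ < K * α ^ 2 * #((X ×ˢ Y) ×ˢ Z) := mul_lt_mul_of_pos_right hK (Nat.cast_pos.2 hcard)
      _ = _ := mul_assoc _ _ _
  simpa using exists_boxBalanced_of_residualSumSq_lt hα ht K hone

end WeakRegularity

section Levelling

/-- The proportion of a family of density `u` to retain so that its density drops to at most `d`;
nothing is discarded when already `u ≤ d`. -/
noncomputable def capFactor (d u : ℝ) : ℝ :=
  d / max d u

variable {d u : ℝ}

lemma capFactor_nonneg (hd : 0 < d) : 0 ≤ capFactor d u := by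
  unfold capFactor
  positivity

lemma capFactor_le_one (hd : 0 < d) : capFactor d u ≤ 1 :=
  (div_le_one (lt_max_of_lt_left hd)).2 (le_max_left d u)

lemma le_capFactor (hd0 : 0 < d) (hd1 : d ≤ 1) (hu : u ≤ 1) : d ≤ capFactor d u :=
  le_div_self hd0.le (lt_max_of_lt_left hd0) (max_le hd1 hu)

lemma mul_capFactor_of_le (hd : 0 < d) (hu : d ≤ u) : u * capFactor d u = d := by
  rw [capFactor, max_eq_right hu, mul_div_cancel₀ d (hd.trans_le hu).ne']

lemma card_filter_card_fiber_lt_le {V L : Type*} [Fintype L] (X : Finset V) (a : V → L) {c : ℝ}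
    (hc : 0 ≤ c) :
    (#{x ∈ X | (#{y ∈ X | a y = a x} : ℝ) < c} : ℝ) ≤ Fintype.card L * c := by
  have hfiber : ∀ i, (#{x ∈ {x ∈ X | (#{y ∈ X | a y = a x} : ℝ) < c} | a x = i} : ℝ) ≤ c := by
    intro i
    obtain hempty | ⟨x, hx⟩ :=
      {x ∈ {x ∈ X | (#{y ∈ X | a y = a x} : ℝ) < c} | a x = i}.eq_empty_or_nonempty
    · simpa [hempty] using hc
    · simp only [mem_filter] at hx
      obtain ⟨⟨-, hsmall⟩, rfl⟩ := hx
      refine le_trans ?_ hsmall.le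
      gcongr
      exact filter_subset _ X
  rw [card_eq_sum_card_fiberwise (f := a) (t := univ) fun _ _ => mem_univ _, Nat.cast_sum]
  simpa using sum_le_card_nsmul univ _ c fun i _ => hfiber i

lemma abs_sum_mul_capFactor_sub_le (hd0 : 0 < d) (hd1 : d ≤ 1) {ι : Type*} {μ : ι → ℝ}
    {s Ω : Finset ι} (hs : s ⊆ Ω) (hμ0 : ∀ ω, 0 ≤ μ ω) :
    |∑ ω ∈ s, (μ ω * capFactor d (μ ω) - d)| ≤ #{ω ∈ Ω | μ ω < d} := by
  have hterm : ∀ ω, |μ ω * capFactor d (μ ω) - d| ≤ if μ ω < d then 1 else 0 := by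
    intro ω
    split_ifs with hlt
    · have hle : μ ω * capFactor d (μ ω) ≤ d :=
        (mul_le_of_le_one_right (hμ0 ω) (capFactor_le_one hd0)).trans hlt.le
      have hnonneg := mul_nonneg (hμ0 ω) (capFactor_nonneg hd0 (u := μ ω))
      exact abs_le.2 ⟨by linarith, by linarith⟩
    · rw [mul_capFactor_of_le hd0 (not_lt.1 hlt), sub_self, abs_zero]
  calc _ ≤ ∑ ω ∈ s, |μ ω * capFactor d (μ ω) - d| := abs_sum_le_sum_abs _ _
    _ ≤ ∑ ω ∈ s, if μ ω < d then (1 : ℝ) else 0 := sum_le_sum fun ω _ => hterm ω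
    _ = #{ω ∈ s | μ ω < d} := sum_boole _ _
    _ ≤ #{ω ∈ Ω | μ ω < d} := by gcongr

variable {V₁ V₂ V₃ : Type*} {ε α : ℝ} {X : Finset V₁} {Y : Finset V₂} {Z : Finset V₃}
  {e : (V₁ × V₂) × V₃ → ℝ}

/-- The mean of `e` is at least `d` on every box in `X × Y × Z` each of whose sides makes up at
least a proportion `ε` of the corresponding side of `X × Y × Z`. -/
def DenseOnBoxes (ε d : ℝ) (X : Finset V₁) (Y : Finset V₂) (Z : Finset V₃)
    (e : (V₁ × V₂) × V₃ → ℝ) : Prop :=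
  ∀ A ⊆ X, ∀ B ⊆ Y, ∀ S ⊆ Z, ε * #X ≤ #A → ε * #Y ≤ #B → ε * #Z ≤ #S →
    d * #((A ×ˢ B) ×ˢ S) ≤ ∑ ω ∈ (A ×ˢ B) ×ˢ S, e ω

lemma DenseOnBoxes.le_one (hdense : DenseOnBoxes ε d X Y Z e) (hε : ε ≤ 1) (hX : X.Nonempty)
    (hY : Y.Nonempty) (hZ : Z.Nonempty) (he : ∀ ω, e ω ≤ 1) : d ≤ 1 := by
  have hself (n : ℕ) : ε * n ≤ n := mul_le_of_le_one_left n.cast_nonneg hε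
  have hcard : 0 < #((X ×ˢ Y) ×ˢ Z) := ((hX.product hY).product hZ).card_pos
  refine le_of_mul_le_mul_right ?_ (Nat.cast_pos.2 hcard : (0 : ℝ) < #((X ×ˢ Y) ×ˢ Z))
  calc d * #((X ×ˢ Y) ×ˢ Z) ≤ ∑ ω ∈ (X ×ˢ Y) ×ˢ Z, e ω :=
        hdense X Subset.rfl Y Subset.rfl Z Subset.rfl (hself _) (hself _) (hself _)
    _ ≤ #((X ×ˢ Y) ×ˢ Z) • (1 : ℝ) := sum_le_card_nsmul _ _ _ fun ω _ => he ω
    _ = 1 * #((X ×ˢ Y) ×ˢ Z) := by rw [nsmul_eq_mul, mul_comm]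

section Labelled

variable {L : Type*} {a : V₁ → L} {b : V₂ → L} {l : V₃ → L}

lemma DenseOnBoxes.le_fiberMean (hdense : DenseOnBoxes ε d X Y Z e) {ω : (V₁ × V₂) × V₃}
    (hω : ω ∈ (X ×ˢ Y) ×ˢ Z) (hX : ε * #X ≤ #{x ∈ X | a x = a ω.1.1})
    (hY : ε * #Y ≤ #{y ∈ Y | b y = b ω.1.2}) (hZ : ε * #Z ≤ #{z ∈ Z | l z = l ω.2}) :
    d ≤ fiberMean ((X ×ˢ Y) ×ˢ Z) (Prod.map (Prod.map a b) l) e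
      (Prod.map (Prod.map a b) l ω) := by
  refine le_fiberMean_of_mul_card_le_sum (F := ({x ∈ X | a x = a ω.1.1} ×ˢ
    {y ∈ Y | b y = b ω.1.2}) ×ˢ {z ∈ Z | l z = l ω.2}) (fun ψ => ?_) ⟨ω, ?_⟩
    (hdense _ (filter_subset _ X) _ (filter_subset _ Y) _ (filter_subset _ Z) hX hY hZ)
  · simp only [mem_filter, mem_product, Prod.ext_iff, Prod.map_fst, Prod.map_snd]
    tauto
  · simpa only [mem_filter, mem_product, and_true] using hω

lemma DenseOnBoxes.card_fiberMean_lt_le [Fintype L] (hdense : DenseOnBoxes ε d X Y Z e)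
    (hε : 0 ≤ ε) :
    (#{ω ∈ (X ×ˢ Y) ×ˢ Z | fiberMean ((X ×ˢ Y) ×ˢ Z) (Prod.map (Prod.map a b) l) e
        (Prod.map (Prod.map a b) l ω) < d} : ℝ) ≤
      3 * (Fintype.card L * ε) * #((X ×ˢ Y) ×ˢ Z) := by
  let Xs := {x ∈ X | (#{x' ∈ X | a x' = a x} : ℝ) < ε * #X}
  let Ys := {y ∈ Y | (#{y' ∈ Y | b y' = b y} : ℝ) < ε * #Y}
  let Zs := {z ∈ Z | (#{z' ∈ Z | l z' = l z} : ℝ) < ε * #Z}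
  have hsmall : {ω ∈ (X ×ˢ Y) ×ˢ Z | fiberMean ((X ×ˢ Y) ×ˢ Z) (Prod.map (Prod.map a b) l) e
        (Prod.map (Prod.map a b) l ω) < d} ⊆
      (Xs ×ˢ Y) ×ˢ Z ∪ (X ×ˢ Ys) ×ˢ Z ∪ (X ×ˢ Y) ×ˢ Zs := by
    intro ω hω
    obtain ⟨hωΩ, hlt⟩ := mem_filter.1 hω
    have hside := mt (fun h : _ ∧ _ ∧ _ => hdense.le_fiberMean hωΩ h.1 h.2.1 h.2.2) hlt.not_ge
    simp only [mem_product] at hωΩ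
    simp only [Xs, Ys, Zs, mem_union, mem_product, mem_filter, ← not_le]
    tauto
  have hXs : (#Xs : ℝ) ≤ Fintype.card L * (ε * #X) :=
    card_filter_card_fiber_lt_le X a (by positivity)
  have hYs : (#Ys : ℝ) ≤ Fintype.card L * (ε * #Y) :=
    card_filter_card_fiber_lt_le Y b (by positivity)
  have hZs : (#Zs : ℝ) ≤ Fintype.card L * (ε * #Z) :=
    card_filter_card_fiber_lt_le Z l (by positivity)
  have hcard := (card_le_card hsmall).trans
    ((card_union_le _ _).trans (Nat.add_le_add_right (card_union_le _ _) _))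
  simp only [card_product] at hcard
  calc _ ≤ (#Xs * #Y * #Z + #X * #Ys * #Z + #X * #Y * #Zs : ℝ) := by exact_mod_cast hcard
    _ ≤ Fintype.card L * (ε * #X) * #Y * #Z + #X * (Fintype.card L * (ε * #Y)) * #Z
        + #X * #Y * (Fintype.card L * (ε * #Z)) := by gcongr
    _ = 3 * (Fintype.card L * ε) * #((X ×ˢ Y) ×ˢ Z) := by
        simp only [card_product, Nat.cast_mul]
        ring

lemma DenseOnBoxes.abs_sum_levelled_sub_le [Fintype L] (hd0 : 0 < d) (hd1 : d ≤ 1)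
    (he : ∀ ω, 0 ≤ e ω) (hε : 0 ≤ ε) (hdense : DenseOnBoxes ε d X Y Z e)
    (hcard : 3 * (Fintype.card L * ε) ≤ α)
    (hbal : BoxBalanced α (capFactor d) X Y Z (Prod.map (Prod.map a b) l) e)
    {A : Finset V₁} {B : Finset V₂} {S : Finset V₃} (hA : A ⊆ X) (hB : B ⊆ Y) (hS : S ⊆ Z) :
    |∑ ω ∈ (A ×ˢ B) ×ˢ S, e ω * capFactor d (fiberMean ((X ×ˢ Y) ×ˢ Z)
        (Prod.map (Prod.map a b) l) e (Prod.map (Prod.map a b) l ω)) - d * #((A ×ˢ B) ×ˢ S)| ≤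
      2 * α * #((X ×ˢ Y) ×ˢ Z) := by
  set μ := fun ω => fiberMean ((X ×ˢ Y) ×ˢ Z) (Prod.map (Prod.map a b) l) e
    (Prod.map (Prod.map a b) l ω)
  have hbox : (A ×ˢ B) ×ˢ S ⊆ (X ×ˢ Y) ×ˢ Z :=
    product_subset_product (product_subset_product hA hB) hS
  have hcap : |∑ ω ∈ (A ×ˢ B) ×ˢ S, (μ ω * capFactor d (μ ω) - d)| ≤ α * #((X ×ˢ Y) ×ˢ Z) :=
    (abs_sum_mul_capFactor_sub_le hd0 hd1 hbox fun _ => fiberMean_nonneg he _).trans <|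
      (hdense.card_fiberMean_lt_le hε).trans (by gcongr)
  have hsplit : ∑ ω ∈ (A ×ˢ B) ×ˢ S, e ω * capFactor d (μ ω) - d * #((A ×ˢ B) ×ˢ S) =
      ∑ ω ∈ (A ×ˢ B) ×ˢ S, (e ω - μ ω) * capFactor d (μ ω)
        + ∑ ω ∈ (A ×ˢ B) ×ˢ S, (μ ω * capFactor d (μ ω) - d) := by
    simp only [sub_mul, sum_sub_distrib, sum_const, nsmul_eq_mul]
    ring
  calc _ ≤ _ := (congrArg abs hsplit).trans_le (abs_add_le _ _)
    _ ≤ α * #((X ×ˢ Y) ×ˢ Z) + α * #((X ×ˢ Y) ×ˢ Z) := add_le_add (hbal A hA B hB S hS) hcap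
    _ = 2 * α * #((X ×ˢ Y) ×ˢ Z) := by ring

end Labelled

lemma exists_levelling_weight (hd : 0 < d) (hα : 0 < α) :
    ∃ ε > 0, ∀ {V₁ V₂ V₃ : Type*} {X : Finset V₁} {Y : Finset V₂} {Z : Finset V₃},
      X.Nonempty → Y.Nonempty → Z.Nonempty → ∀ {e : (V₁ × V₂) × V₃ → ℝ},
      (∀ ω, 0 ≤ e ω) → (∀ ω, e ω ≤ 1) → DenseOnBoxes ε d X Y Z e →
      ∃ w : (V₁ × V₂) × V₃ → ℝ, (∀ ω, d * e ω ≤ w ω) ∧ (∀ ω, w ω ≤ e ω) ∧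
        ∀ A ⊆ X, ∀ B ⊆ Y, ∀ S ⊆ Z,
          |∑ ω ∈ (A ×ˢ B) ×ˢ S, w ω - d * #((A ×ˢ B) ×ˢ S)| ≤
            2 * α * #((X ×ˢ Y) ×ˢ Z) := by
  obtain ⟨K, hK⟩ := exists_nat_gt (1 / α ^ 2)
  refine ⟨min 1 (α / (3 * 2 ^ K)), by positivity, ?_⟩
  intro V₁ V₂ V₃ X Y Z hX hY hZ e he0 he1 hdense
  have hd1 : d ≤ 1 := hdense.le_one (min_le_left _ _) hX hY hZ he1
  obtain ⟨L, _, a, b, l, hL, hbal⟩ := exists_boxBalanced (t := capFactor d)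
    (fun u => (abs_of_nonneg (capFactor_nonneg hd)).trans_le (capFactor_le_one hd))
    he0 he1 hX hY hZ hα.le ((div_lt_iff₀ (by positivity)).1 hK)
  have hcard : 3 * (Fintype.card L * min 1 (α / (3 * 2 ^ K))) ≤ α :=
    calc 3 * (Fintype.card L * min 1 (α / (3 * 2 ^ K)))
        ≤ 3 * ((2 ^ K : ℕ) * (α / (3 * 2 ^ K))) := by gcongr; exact min_le_right _ _
      _ = α := by push_cast; field_simp
  refine ⟨fun ω => e ω * capFactor d (fiberMean ((X ×ˢ Y) ×ˢ Z) (Prod.map (Prod.map a b) l) e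
    (Prod.map (Prod.map a b) l ω)), fun ω => ?_, fun ω => ?_, fun A hA B hB S hS => ?_⟩
  · rw [mul_comm]
    exact mul_le_mul_of_nonneg_left (le_capFactor hd hd1 (fiberMean_le_one he1 _)) (he0 ω)
  · exact mul_le_of_le_one_right (he0 ω) (capFactor_le_one hd)
  · exact hdense.abs_sum_levelled_sub_le hd hd1 he0 (by positivity) hcard hbal hA hB hS

end Levelling

section Graphs

variable {V C : Type*}

lemma pairCount_eq_sum (G : SimpleGraph V) (A B : Finset V) :
    (pairCount G A B : ℝ) = ∑ p ∈ A ×ˢ B, if G.Adj p.1 p.2 then 1 else 0 :=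
  (sum_boole _ _).symm

lemma pairCount_comm (G : SimpleGraph V) (A B : Finset V) : pairCount G A B = pairCount G B A := by
  refine card_equiv (Equiv.prodComm V V) fun p => ?_
  simp only [mem_filter, mem_product, Equiv.prodComm_apply, Prod.fst_swap, Prod.snd_swap,
    G.adj_comm p.1, and_comm (a := p.1 ∈ A)]

lemma degIn_eq_pairCount (G : SimpleGraph V) (v : V) (B : Finset V) :
    degIn G v B = pairCount G {v} B := by
  rw [degIn, pairCount, singleton_product, filter_map, card_map]
  rfl

lemma pairCount_fromRel {X Y A B : Finset V} (hXY : Disjoint X Y) {H : Finset (V × V)}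
    (hH : H ⊆ X ×ˢ Y) (hA : A ⊆ X) (hB : B ⊆ Y) :
    pairCount (SimpleGraph.fromRel fun x y => (x, y) ∈ H) A B = #(H ∩ A ×ˢ B) := by
  rw [pairCount]
  congr 1
  ext ⟨x, y⟩
  simp only [mem_filter, mem_inter, mem_product, SimpleGraph.fromRel_adj]
  constructor
  · rintro ⟨⟨hx, hy⟩, -, h | h⟩
    · exact ⟨h, hx, hy⟩
    · exact absurd (mem_product.1 (hH h)).1 (disjoint_right.1 hXY (hB hy))
  · rintro ⟨h, hx, hy⟩
    exact ⟨⟨hx, hy⟩, hXY.forall_ne_finset (hA hx) (hB hy), Or.inl h⟩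

/-- The indicator function of the `3`-graph of all `(x, y, c)` such that `xy` is an edge of
`G c`. -/
noncomputable def edgeIndicator (G : C → SimpleGraph V) (ω : (V × V) × C) : ℝ :=
  if (G ω.2).Adj ω.1.1 ω.1.2 then 1 else 0

lemma edgeIndicator_nonneg (G : C → SimpleGraph V) (ω : (V × V) × C) : 0 ≤ edgeIndicator G ω := by
  unfold edgeIndicator
  positivity

lemma edgeIndicator_le_one (G : C → SimpleGraph V) (ω : (V × V) × C) : edgeIndicator G ω ≤ 1 := by
  unfold edgeIndicator
  split_ifs <;> norm_num

lemma sum_edgeIndicator (G : C → SimpleGraph V) (A B : Finset V) (c : C) :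
    ∑ p ∈ A ×ˢ B, edgeIndicator G (p, c) = pairCount (G c) A B :=
  (pairCount_eq_sum (G c) A B).symm

/-- `G'` is a rounding of the edge weights `w` between `X` and `Y`: the number of edges in each
box `A × B ⊆ X × Y` and the degree of each vertex are within a relative error `η` of their
weighted counterparts. -/
structure IsRounding (η : ℝ) (w : V × V → ℝ) (X Y : Finset V) (G' : SimpleGraph V) : Prop where
  box : ∀ A ⊆ X, ∀ B ⊆ Y, |(pairCount G' A B : ℝ) - ∑ p ∈ A ×ˢ B, w p| ≤ η * (#X * #Y)
  left : ∀ x ∈ X, |(pairCount G' {x} Y : ℝ) - ∑ p ∈ {x} ×ˢ Y, w p| ≤ η * #Y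
  right : ∀ y ∈ Y, |(pairCount G' X {y} : ℝ) - ∑ p ∈ X ×ˢ {y}, w p| ≤ η * #X

variable {X Y : Finset V} {η : ℝ}

lemma exists_isRounding_le {G : SimpleGraph V} {w : V × V → ℝ} (hXY : Disjoint X Y)
    (hw0 : ∀ p, 0 ≤ w p) (hwG : ∀ p, w p ≤ if G.Adj p.1 p.2 then 1 else 0)
    (hη0 : 0 < η) (hη1 : η ≤ 1) (hfail : roundingFailure (η ^ 2 / 4) #X #Y < 1) :
    ∃ G' ≤ G, IsRounding η w X Y G' := by
  have hw1 : ∀ p, w p ≤ 1 := fun p => (hwG p).trans (by split_ifs <;> norm_num)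
  obtain ⟨H, hH, hHw, hbox, hleft, hright⟩ :=
    exists_subset_product_discrepancy_le hw0 hw1 hη0 hη1 hfail
  have hHG : ∀ {x y}, (x, y) ∈ H → G.Adj x y := by
    intro x y hxy
    by_contra hadj
    exact hHw _ hxy (le_antisymm ((hwG (x, y)).trans_eq (if_neg hadj)) (hw0 _))
  refine ⟨SimpleGraph.fromRel fun x y => (x, y) ∈ H, ?_, ?_, ?_, ?_⟩
  · rintro x y ⟨-, h | h⟩
    · exact hHG h
    · exact (hHG h).symm
  · intro A hA B hB
    rw [pairCount_fromRel hXY hH hA hB]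
    exact hbox A hA B hB
  · intro x hx
    rw [pairCount_fromRel hXY hH (singleton_subset_iff.2 hx) Subset.rfl]
    exact hleft x hx
  · intro y hy
    rw [pairCount_fromRel hXY hH Subset.rfl (singleton_subset_iff.2 hy)]
    exact hright y hy

variable {G G' : C → SimpleGraph V} {w : (V × V) × C → ℝ} {D : Finset C} {d : ℝ}

lemma half_sq_mul_le_sum_pairCount {A B : Finset V} {n : ℝ} (hd : 0 ≤ d) (hn : 0 ≤ n)
    (hη : η ≤ d ^ 2 / 2) (hw : ∀ ω, d * edgeIndicator G ω ≤ w ω)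
    (hround : ∀ c ∈ D, |(pairCount (G' c) A B : ℝ) - ∑ p ∈ A ×ˢ B, w (p, c)| ≤ η * n)
    (hG : d * n * #D ≤ ∑ c ∈ D, (pairCount (G c) A B : ℝ)) :
    d ^ 2 / 2 * n * #D ≤ ∑ c ∈ D, (pairCount (G' c) A B : ℝ) := by
  have hcolour : ∀ c ∈ D, d * pairCount (G c) A B - d ^ 2 / 2 * n ≤ pairCount (G' c) A B := by
    intro c hc
    have hweight : d * pairCount (G c) A B ≤ ∑ p ∈ A ×ˢ B, w (p, c) := by
      rw [← sum_edgeIndicator, mul_sum]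
      exact sum_le_sum fun p _ => hw (p, c)
    linarith [(abs_le.1 (hround c hc)).1, mul_le_mul_of_nonneg_right hη hn]
  calc d ^ 2 / 2 * n * #D ≤ d * (d * n * #D) - #D * (d ^ 2 / 2 * n) := by linarith
    _ ≤ d * ∑ c ∈ D, (pairCount (G c) A B : ℝ) - #D * (d ^ 2 / 2 * n) := by gcongr
    _ = ∑ c ∈ D, (d * pairCount (G c) A B - d ^ 2 / 2 * n) := by
        rw [sum_sub_distrib, mul_sum, sum_const, nsmul_eq_mul]
    _ ≤ ∑ c ∈ D, (pairCount (G' c) A B : ℝ) := sum_le_sum hcolour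

lemma abs_colDensity_sub_le {A B : Finset V} {S : Finset C} {β : ℝ}
    (hpos : (0 : ℝ) < #S * #A * #B)
    (hsum : |∑ c ∈ S, (pairCount (G c) A B : ℝ) - d * (#S * #A * #B)| ≤ β * (#S * #A * #B)) :
    |colDensity G A B S - d| ≤ β := by
  rw [colDensity, div_sub' hpos.ne', abs_div, abs_of_pos hpos, div_le_iff₀ hpos, mul_comm _ d]
  exact hsum

lemma le_colDensity (hX : X.Nonempty) (hY : Y.Nonempty) (hD : D.Nonempty)
    (hG : ∀ c ∈ D, d * #X * #Y ≤ pairCount (G c) X Y) : d ≤ colDensity G X Y D := by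
  have hpos : (0 : ℝ) < #D * #X * #Y := by
    exact_mod_cast Nat.mul_pos (Nat.mul_pos hD.card_pos hX.card_pos) hY.card_pos
  rw [colDensity, le_div_iff₀ hpos]
  calc d * (#D * #X * #Y) = #D • (d * #X * #Y) := by rw [nsmul_eq_mul]; ring
    _ ≤ ∑ c ∈ D, (pairCount (G c) X Y : ℝ) := card_nsmul_le_sum _ _ _ hG

lemma colReg_of_abs_sum_sub_le {ε u : ℝ} (hε : 0 < ε) (hX : X.Nonempty) (hY : Y.Nonempty)
    (hD : D.Nonempty) (hd : d ≤ colDensity G X Y D)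
    (hbox : ∀ A ⊆ X, ∀ B ⊆ Y, ∀ S ⊆ D,
      |∑ c ∈ S, (pairCount (G c) A B : ℝ) - u * (#S * #A * #B)| ≤
        ε ^ 4 / 4 * (#D * #X * #Y)) :
    ColReg ε d G X Y D := by
  have hclose : ∀ A ⊆ X, ∀ B ⊆ Y, ∀ S ⊆ D, ε * #X ≤ #A → ε * #Y ≤ #B → ε * #D ≤ #S →
      |colDensity G A B S - u| ≤ ε / 4 := by
    intro A hA B hB S hS hεA hεB hεS
    have hpos : (0 : ℝ) < #D * #X * #Y := by
      exact_mod_cast Nat.mul_pos (Nat.mul_pos hD.card_pos hX.card_pos) hY.card_pos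
    have hsize : ε ^ 3 * (#D * #X * #Y) ≤ (#S * #A * #B : ℝ) :=
      calc ε ^ 3 * (#D * #X * #Y) = ε * #D * (ε * #X) * (ε * #Y) := by ring
        _ ≤ #S * #A * #B := by gcongr
    refine abs_colDensity_sub_le ((mul_pos (pow_pos hε 3) hpos).trans_le hsize) ?_
    calc _ ≤ ε ^ 4 / 4 * (#D * #X * #Y) := hbox A hA B hB S hS
      _ = ε / 4 * (ε ^ 3 * (#D * #X * #Y)) := by ring
      _ ≤ ε / 4 * (#S * #A * #B) := by gcongr
  refine ⟨hd, fun A hA B hB S hS hεA hεB hεS => ?_⟩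
  have hε1 : ε ≤ 1 := by
    have hle : ε * #X ≤ 1 * #X := by
      rw [one_mul]
      exact hεA.trans (Nat.cast_le.2 (card_le_card hA))
    exact le_of_mul_le_mul_right hle (Nat.cast_pos.2 hX.card_pos)
  have hself (n : ℕ) : ε * n ≤ n := mul_le_of_le_one_left n.cast_nonneg hε1
  calc |colDensity G A B S - colDensity G X Y D|
      ≤ |colDensity G A B S - u| + |colDensity G X Y D - u| := by
        rw [abs_sub_comm (colDensity G X Y D) u]
        exact abs_sub_le _ _ _
    _ ≤ ε / 4 + ε / 4 := add_le_add (hclose A hA B hB S hS hεA hεB hεS)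
        (hclose X Subset.rfl Y Subset.rfl D Subset.rfl (hself _) (hself _) (hself _))
    _ < ε := by linarith

lemma abs_sum_pairCount_sub_le {α : ℝ} (hη : η ≤ α)
    (hround : ∀ c, IsRounding η (fun p => w (p, c)) X Y (G' c))
    {A B : Finset V} {S : Finset C} (hA : A ⊆ X) (hB : B ⊆ Y) (hS : S ⊆ D)
    (hlevel : |∑ ω ∈ (A ×ˢ B) ×ˢ S, w ω - d * #((A ×ˢ B) ×ˢ S)| ≤ 2 * α * #((X ×ˢ Y) ×ˢ D)) :
    |∑ c ∈ S, (pairCount (G' c) A B : ℝ) - d * (#S * #A * #B)| ≤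
      3 * α * (#D * #X * #Y) := by
  have hrounding : |∑ c ∈ S, ((pairCount (G' c) A B : ℝ) - ∑ p ∈ A ×ˢ B, w (p, c))| ≤
      α * (#D * #X * #Y) :=
    calc _ ≤ ∑ c ∈ S, |(pairCount (G' c) A B : ℝ) - ∑ p ∈ A ×ˢ B, w (p, c)| :=
          abs_sum_le_sum_abs _ _
      _ ≤ ∑ c ∈ D, |(pairCount (G' c) A B : ℝ) - ∑ p ∈ A ×ˢ B, w (p, c)| :=
          sum_le_sum_of_subset_of_nonneg hS fun _ _ _ => abs_nonneg _
      _ ≤ #D • (α * (#X * #Y)) := sum_le_card_nsmul _ _ _ fun c _ =>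
          ((hround c).box A hA B hB).trans (by gcongr)
      _ = α * (#D * #X * #Y) := by rw [nsmul_eq_mul]; ring
  rw [sum_product_right] at hlevel
  simp only [card_product, Nat.cast_mul] at hlevel
  calc _ = |∑ c ∈ S, ((pairCount (G' c) A B : ℝ) - ∑ p ∈ A ×ˢ B, w (p, c))
          + (∑ c ∈ S, ∑ p ∈ A ×ˢ B, w (p, c) - d * (#A * #B * #S))| := by
        rw [sum_sub_distrib]
        ring_nf
    _ ≤ α * (#D * #X * #Y) + 2 * α * (#X * #Y * #D) :=
        (abs_add_le _ _).trans (add_le_add hrounding hlevel)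
    _ = 3 * α * (#D * #X * #Y) := by ring

lemma ColHalfSuperReg.denseOnBoxes {ε : ℝ} (hG : ColHalfSuperReg ε d G X Y D) :
    DenseOnBoxes ε d X Y D (edgeIndicator G) := by
  intro A hA B hB S hS hεA hεB hεS
  rw [sum_product_right]
  simp only [sum_edgeIndicator, card_product, Nat.cast_mul]
  linarith [hG.1 A hA B hB S hS hεA hεB hεS]

lemma ColHalfSuperReg.colSuperReg_of_isRounding {ε ε' α : ℝ} (hd : 0 ≤ d) (hε' : 0 < ε')
    (hX : X.Nonempty) (hY : Y.Nonempty) (hD : D.Nonempty) (hG : ColHalfSuperReg ε d G X Y D)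
    (hw : ∀ ω, d * edgeIndicator G ω ≤ w ω)
    (hlevel : ∀ A ⊆ X, ∀ B ⊆ Y, ∀ S ⊆ D,
      |∑ ω ∈ (A ×ˢ B) ×ˢ S, w ω - d * #((A ×ˢ B) ×ˢ S)| ≤ 2 * α * #((X ×ˢ Y) ×ˢ D))
    (hα : 3 * α ≤ ε' ^ 4 / 4) (hηα : η ≤ α) (hηd : η ≤ d ^ 2 / 2)
    (hround : ∀ c, IsRounding η (fun p => w (p, c)) X Y (G' c)) :
    ColSuperReg ε' (d ^ 2 / 2) G' X Y D := by
  obtain ⟨-, hleft, hright, hcolour⟩ := hG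
  have hcolour' : ∀ c ∈ D, d ^ 2 / 2 * #X * #Y ≤ pairCount (G' c) X Y := by
    intro c hc
    have h := half_sq_mul_le_sum_pairCount (D := {c}) hd (by positivity) hηd hw
      (fun c _ => (hround c).box X Subset.rfl Y Subset.rfl)
      (by simpa [mul_assoc] using hcolour c hc)
    simpa [mul_assoc] using h
  refine ⟨colReg_of_abs_sum_sub_le (u := d) hε' hX hY hD (le_colDensity hX hY hD hcolour') ?_,
    fun x hx => ?_, fun y hy => ?_, hcolour'⟩
  · intro A hA B hB S hS
    exact (abs_sum_pairCount_sub_le hηα hround hA hB hS (hlevel A hA B hB S hS)).trans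
      (by gcongr)
  · simp only [degIn_eq_pairCount] at hleft ⊢
    exact half_sq_mul_le_sum_pairCount hd (Nat.cast_nonneg _) hηd hw
      (fun c _ => (hround c).left x hx) (hleft x hx)
  · simp only [degIn_eq_pairCount, pairCount_comm _ {_} X] at hright ⊢
    exact half_sq_mul_le_sum_pairCount hd (Nat.cast_nonneg _) hηd hw
      (fun c _ => (hround c).right y hy) (hright y hy)

end Graphs

lemma exists_colSuperReg_le_of_colHalfSuperReg {d ε' : ℝ} (hd : 0 < d) (hε' : 0 < ε') :
    ∃ ε > 0, ∃ κ > 0, ∀ {V C : Type*} {G : C → SimpleGraph V} {X Y : Finset V} {D : Finset C},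
      Disjoint X Y → X.Nonempty → Y.Nonempty → D.Nonempty → roundingFailure κ #X #Y < 1 →
      ColHalfSuperReg ε d G X Y D →
      ∃ G' : C → SimpleGraph V, (∀ c, G' c ≤ G c) ∧ ColSuperReg ε' (d ^ 2 / 2) G' X Y D := by
  have hα : 0 < ε' ^ 4 / 12 := by positivity
  obtain ⟨ε, hε, hweight⟩ := exists_levelling_weight hd hα
  let η := min 1 (min (ε' ^ 4 / 12) (d ^ 2 / 2))
  have hη : 0 < η := by positivity
  refine ⟨ε, hε, η ^ 2 / 4, by positivity, fun {V C G X Y D} hXY hX hY hD hfail hG => ?_⟩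
  obtain ⟨w, hdw, hwe, hlevel⟩ := hweight hX hY hD (edgeIndicator_nonneg _)
    (edgeIndicator_le_one _) hG.denseOnBoxes
  have hw : ∀ ω, 0 ≤ w ω := fun ω => (mul_nonneg hd.le (edgeIndicator_nonneg _ ω)).trans (hdw ω)
  choose G' hG' hround using fun c => exists_isRounding_le (G := G c) hXY (fun p => hw (p, c))
    (fun p => hwe (p, c)) hη (min_le_left _ _) hfail
  exact ⟨G', hG', hG.colSuperReg_of_isRounding hd.le hε' hX hY hD hdw hlevel (by linarith)
    ((min_le_right _ _).trans (min_le_left _ _)) ((min_le_right _ _).trans (min_le_right _ _))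
    hround⟩

section Swap

variable {V C : Type*} {G : C → SimpleGraph V} {X Y : Finset V} {D : Finset C} {ε d : ℝ}

lemma colDensity_comm : colDensity G X Y D = colDensity G Y X D := by
  simp only [colDensity, pairCount_comm _ X Y, mul_right_comm _ (#X : ℝ)]

lemma ColReg.swap (h : ColReg ε d G X Y D) : ColReg ε d G Y X D := by
  refine ⟨h.1.trans_eq colDensity_comm, fun B hB A hA S hS hεB hεA hεS => ?_⟩
  rw [colDensity_comm (X := B), colDensity_comm (X := Y)]
  exact h.2 A hA B hB S hS hεA hεB hεS

lemma ColSuperReg.swap (h : ColSuperReg ε d G X Y D) : ColSuperReg ε d G Y X D := by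
  refine ⟨h.1.swap, h.2.2.1, h.2.1, fun c hc => ?_⟩
  rw [mul_right_comm, pairCount_comm]
  exact h.2.2.2 c hc

end Swap

namespace GTemplate

variable {V C : Type*} {r : ℕ}

lemma Ge_min_max (T : GTemplate V C r) (c : C) (i j : Fin r) :
    T.Ge c (min i j) (max i j) = T.Ge c i j := by
  obtain hij | hji := le_total i j
  · rw [min_eq_left hij, max_eq_right hij]
  · rw [min_eq_right hji, max_eq_left hji, T.Ge_symm]

/-- The template obtained from `T` by passing to the subgraphs `F i j c` of the bipartite graphs
`T.Ge c i j`. Only the values at `i ≤ j` are used, as `F` is not assumed to be symmetric. -/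
def restrict (T : GTemplate V C r) (F : Fin r → Fin r → C → SimpleGraph V)
    (hF : ∀ i j c, F i j c ≤ T.Ge c i j) : GTemplate V C r where
  R := T.R
  Vc := T.Vc
  Cc := T.Cc
  Ge c i j := F (min i j) (max i j) c
  Cc_symm := T.Cc_symm
  Ge_symm c i j := by rw [min_comm, max_comm]
  Vc_disj := T.Vc_disj
  Cc_support := T.Cc_support
  Ge_support c i j hc := by
    rw [← le_bot_iff, ← T.Ge_support c i j hc, ← T.Ge_min_max]
    exact hF _ _ c
  Ge_bipartite c i j x y hxy := by
    have hadj := hF _ _ c hxy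
    rw [T.Ge_min_max] at hadj
    exact T.Ge_bipartite c i j x y hadj

lemma restrict_Ge_le {T : GTemplate V C r} {F : Fin r → Fin r → C → SimpleGraph V}
    (hF : ∀ i j c, F i j c ≤ T.Ge c i j) (c : C) (i j : Fin r) :
    (T.restrict F hF).Ge c i j ≤ T.Ge c i j :=
  (hF _ _ c).trans_eq (T.Ge_min_max c i j)

lemma restrict_colSuperReg {T : GTemplate V C r} {F : Fin r → Fin r → C → SimpleGraph V}
    (hF : ∀ i j c, F i j c ≤ T.Ge c i j) {ε d : ℝ}
    (h : ∀ i j, T.R.Adj i j → ColSuperReg ε d (F i j) (T.Vc i) (T.Vc j) (T.Cc i j))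
    {i j : Fin r} (hij : T.R.Adj i j) :
    ColSuperReg ε d (fun c => (T.restrict F hF).Ge c i j) (T.Vc i) (T.Vc j) (T.Cc i j) := by
  simp only [restrict]
  obtain hle | hle := le_total i j
  · rw [min_eq_left hle, max_eq_right hle]
    exact h i j hij
  · rw [min_eq_right hle, max_eq_left hle, T.Cc_symm]
    exact (h j i hij.symm).swap

end GTemplate

universe u v

theorem stmt11_general {d δ ε' : ℝ} (hd : 0 < d) (hδ : 0 < δ) (hε' : 0 < ε') :
    ∃ (ε : ℝ) (m₀ : ℕ), 0 < ε ∧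
    ∀ m : ℝ, m₀ ≤ m →
    ∀ {r : ℕ} {V : Type u} {C : Type v} (T : GTemplate V C r),
      T.IsHalfSuperParam m ε d δ →
      ∃ T' : GTemplate V C r, T'.R = T.R ∧ T'.Vc = T.Vc ∧ T'.Cc = T.Cc ∧
        (∀ c i j, T'.Ge c i j ≤ T.Ge c i j) ∧
        T'.IsSuperParam m ε' (d ^ 2 / 2) δ := by
  obtain ⟨ε, hε, κ, hκ, hpair⟩ := exists_colSuperReg_le_of_colHalfSuperReg hd hε'
  obtain ⟨M, hM⟩ := Filter.eventually_atTop.1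
    ((eventually_roundingFailure_lt_one hκ).and (Filter.eventually_gt_atTop 0))
  obtain ⟨m₀, hm₀⟩ := exists_nat_ge M
  refine ⟨ε, m₀, hε, fun m hm r V C T ⟨hV, hC, hT⟩ => ?_⟩
  obtain ⟨hfail, hm0⟩ := hM m (hm₀.trans hm)
  have hVne : ∀ i, (T.Vc i).Nonempty := fun i =>
    card_pos.1 (Nat.cast_pos.1 (hm0.trans_le (hV i).1))
  have hcluster : ∀ i j, ∃ F : C → SimpleGraph V, (∀ c, F c ≤ T.Ge c i j) ∧
      (T.R.Adj i j → ColSuperReg ε' (d ^ 2 / 2) F (T.Vc i) (T.Vc j) (T.Cc i j)) := by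
    intro i j
    by_cases hij : T.R.Adj i j
    · obtain ⟨F, hF, hsuper⟩ := hpair (T.Vc_disj i j hij.ne) (hVne i) (hVne j)
        (card_pos.1 (Nat.cast_pos.1 ((mul_pos hδ hm0).trans_le (hC i j hij))))
        (hfail _ _ (hV i).1 (hV i).2 (hV j).1 (hV j).2) (hT i j hij)
      exact ⟨F, hF, fun _ => hsuper⟩
    · exact ⟨fun c => T.Ge c i j, fun _ => le_rfl, fun h => absurd h hij⟩
  choose F hF hsuper using hcluster
  exact ⟨T.restrict F hF, rfl, rfl, rfl, GTemplate.restrict_Ge_le hF, hV, hC,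
    fun i j hij => GTemplate.restrict_colSuperReg hF hsuper hij⟩

/-! ## Statement 11 -/

theorem stmt11 (r : ℕ) (hr : 2 ≤ r) (d δ : ℝ) (hd : 0 < d) (hδ : 0 < δ) :
    ∃ ε'₀ : ℝ, 0 < ε'₀ ∧ ∀ ε' : ℝ, 0 < ε' → ε' ≤ ε'₀ →
    ∃ (ε : ℝ) (m₀ : ℕ), 0 < ε ∧
    ∀ m : ℕ, m₀ ≤ m →
    ∀ (V : Type) (C : Type) (T : GTemplate V C r),
      T.IsHalfSuperParam (m : ℝ) ε d δ →
      ∃ T' : GTemplate V C r, T'.R = T.R ∧ T'.Vc = T.Vc ∧ T'.Cc = T.Cc ∧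
        (∀ c i j, T'.Ge c i j ≤ T.Ge c i j) ∧
        T'.IsSuperParam (m : ℝ) ε' (d ^ 2 / 2) δ := by
  refine ⟨1, one_pos, fun ε' hε' _ => ?_⟩
  obtain ⟨ε, m₀, hε, h⟩ := stmt11_general hd hδ hε'
  exact ⟨ε, m₀, hε, fun m hm V C T => h m (Nat.cast_le.2 hm) T⟩
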